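/- Let A be an s×s matrix over F with 2^{k−1} < s < 2^k, let n = 2^k, and let A' be the n×n matrix whose top-left s×s block equals A and whose remaining entries are zero, so that A' ∈ F_{I,J} with I = J = diag(𝟙_s, 0_{n−s}). If (L', E', U') is an LEU-decomposition of A' ∈ F_{I,J}, then L' = diag(L, 𝟙_{n−s}), U' = diag(U, 𝟙_{n−s}), and E' = diag(E, 0_{n−s}) for some s×s matrices L, U, E, and (L, E, U) is an LEU-decomposition of A (with I = J = 𝟙_s). -/

import Mathlib

open Matrix

/-- `P_n`: matrices all of whose entries lie in `{0,1}`, with at most one nonzero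
entry in each row and at most one nonzero entry in each column. -/
def InP {F : Type*} [Field F] {m : Type*} (E : Matrix m m F) : Prop :=
  (∀ i j, E i j = 0 ∨ E i j = 1) ∧
  (∀ i j k, E i j ≠ 0 → E i k ≠ 0 → j = k) ∧
  (∀ i j k, E i j ≠ 0 → E k j ≠ 0 → i = k)

/-- `D_n`: diagonal matrices with diagonal entries in `{0,1}`. -/
def InD {F : Type*} [Field F] {m : Type*} (M : Matrix m m F) : Prop :=
  M.IsDiag ∧ ∀ i, M i i = 0 ∨ M i i = 1

/-- `F_{I,J}`: the set of matrices `B` with `I * B * J = B`. -/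
def InFIJ {F : Type*} [Field F] {n : ℕ} (I J B : Matrix (Fin n) (Fin n) F) : Prop :=
  I * B * J = B

/-- `(L, E, U)` is an LEU-decomposition of `A ∈ F_{I,J}`: `A = L⁻¹ * E * U⁻¹`,
`E ∈ P_n`, `L` is an invertible lower triangular matrix, `U` is an upper
triangular matrix with unit diagonal, `L - (𝟙 - I_E) ∈ F_{I, I_E}` and
`U - (𝟙 - J_E) ∈ F_{J_E, J}`, where `I_E = E * Eᵀ` and `J_E = Eᵀ * E`. -/
def IsLEU {F : Type*} [Field F] {n : ℕ}
    (I J A L E U : Matrix (Fin n) (Fin n) F) : Prop :=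
  A = L⁻¹ * E * U⁻¹ ∧ InP E ∧ IsUnit L ∧
  (∀ i j : Fin n, i < j → L i j = 0) ∧
  (∀ i j : Fin n, j < i → U i j = 0) ∧ (∀ i, U i i = 1) ∧
  InFIJ I (E * Eᵀ) (L - (1 - E * Eᵀ)) ∧
  InFIJ (Eᵀ * E) J (U - (1 - Eᵀ * E))

/-- Extend an `s×s` matrix `M` to an `n×n` matrix having `M` as its top-left
block and `d` on the remaining diagonal positions (zero elsewhere). -/
def ext {F : Type*} [Field F] {s : ℕ} (n : ℕ) (M : Matrix (Fin s) (Fin s) F)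
    (d : F) : Matrix (Fin n) (Fin n) F :=
  Matrix.of fun i j =>
    if hi : (i : ℕ) < s then
      (if hj : (j : ℕ) < s then M ⟨i, hi⟩ ⟨j, hj⟩ else 0)
    else (if i = j then d else 0)

/-!
If `i ≥ s`, row `i` of `I` vanishes, hence so does row `i` of `L' - (𝟙 - I_{E'})`. Row `i` of
`E'` must then vanish: otherwise `I_{E'}` has a `1` at `(i, i)` and `L'` a `0` there, which is
impossible for an invertible triangular matrix. So `I_{E'}` has zero row `i` and `L'` agrees with
`𝟙` on that row, while triangularity clears the part of `L'` to the right of the block.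
Transposing gives the same for `U'`. Since `diag(M, c • 𝟙)` is compatible with products,
transposes and inverses, every condition on `(L', E', U')` can be read off on the top-left block.
-/

theorem isUnit_iff_isUnit_diag_of_isUpperTriangular {R m : Type*} [CommRing R] [Fintype m]
    [LinearOrder m] {M : Matrix m m R} (hM : M.IsUpperTriangular) :
    IsUnit M ↔ ∀ i, IsUnit (M i i) := by
  rw [isUnit_iff_isUnit_det, det_of_isUpperTriangular hM, IsUnit.prod_univ_iff]

section PartialPermutation

variable {F : Type*} [Field F] {l m : Type*} {E : Matrix m m F}

theorem InP.transpose (hE : InP E) : InP Eᵀ :=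
  ⟨fun i j => hE.1 j i, fun i j k => hE.2.2 j i k, fun i j k => hE.2.1 j i k⟩

theorem InP.submatrix (hE : InP E) {f g : l → m} (hf : f.Injective) (hg : g.Injective) :
    InP (E.submatrix f g) :=
  ⟨fun _ _ => hE.1 _ _, fun _ _ _ h h' => hg (hE.2.1 _ _ _ h h'),
    fun _ _ _ h h' => hf (hE.2.2 _ _ _ h h')⟩

theorem InP.mul_transpose_apply_self [Fintype m] (hE : InP E) {i j : m} (hij : E i j ≠ 0) :
    (E * Eᵀ) i i = 1 := by
  have hrow : ∀ k, k ≠ j → E i k = 0 := fun k hk => by_contra fun h => hk (hE.2.1 i k j h hij)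
  rw [mul_apply, Finset.sum_eq_single j (fun k _ hk => by rw [hrow k hk, zero_mul]) (by simp),
    transpose_apply, (hE.1 i j).resolve_left hij, one_mul]

end PartialPermutation

section ZeroRow

variable {F : Type*} [Field F] {n : ℕ} {I J B E L : Matrix (Fin n) (Fin n) F} {i : Fin n}

theorem InFIJ.transpose (h : InFIJ I J B) : InFIJ Jᵀ Iᵀ Bᵀ := by
  simpa only [InFIJ, transpose_mul, Matrix.mul_assoc] using congrArg Matrix.transpose h

theorem InFIJ.row_eq_zero (h : InFIJ I J B) (hI : I i = 0) : B i = 0 := by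
  rw [← show I * B * J = B from h, Matrix.mul_assoc, mul_apply_eq_vecMul, hI, zero_vecMul]

theorem row_eq_zero_of_inFIJ (hE : InP E) (hL : L i i ≠ 0)
    (h : InFIJ I (E * Eᵀ) (L - (1 - E * Eᵀ))) (hI : I i = 0) : E i = 0 := by
  funext j
  by_contra hij
  have hdiag : (L - (1 - E * Eᵀ)) i i = 0 := congrFun (h.row_eq_zero hI) i
  rw [Matrix.sub_apply, Matrix.sub_apply, hE.mul_transpose_apply_self hij, one_apply_eq, sub_self,
    sub_zero] at hdiag
  exact hL hdiag

theorem row_eq_one_of_inFIJ (hE : InP E) (hL : L i i ≠ 0)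
    (h : InFIJ I (E * Eᵀ) (L - (1 - E * Eᵀ))) (hI : I i = 0) :
    L i = (1 : Matrix (Fin n) (Fin n) F) i := by
  have hEE : (E * Eᵀ) i = 0 := by
    rw [mul_apply_eq_vecMul, row_eq_zero_of_inFIJ hE hL h hI, zero_vecMul]
  have hrow : L i - ((1 : Matrix (Fin n) (Fin n) F) i - (E * Eᵀ) i) = 0 := h.row_eq_zero hI
  rwa [hEE, sub_zero, sub_eq_zero] at hrow

end ZeroRow

section Ext

variable {F : Type*} [Field F] {s n : ℕ} {c d : F} {M N : Matrix (Fin s) (Fin s) F}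

theorem ext_apply_castLE (hs : s ≤ n) (i j : Fin s) :
    ext n M d (Fin.castLE hs i) (Fin.castLE hs j) = M i j := by
  simp [_root_.ext]

theorem ext_apply_of_le {i j : Fin n} (hij : s ≤ i ∨ s ≤ j) :
    ext n M d i j = (d • (1 : Matrix (Fin n) (Fin n) F)) i j := by
  simp only [_root_.ext, of_apply, Matrix.smul_apply, one_apply, smul_eq_mul, mul_ite, mul_one,
    mul_zero]
  split_ifs <;> first | rfl | omega

theorem ext_zero_row_eq_zero {i : Fin n} (hi : s ≤ i) : ext n M 0 i = 0 := by
  funext j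
  rw [ext_apply_of_le (Or.inl hi), zero_smul, Matrix.zero_apply, Pi.zero_apply]

theorem ext_submatrix_castLE (hs : s ≤ n) :
    (ext n M d).submatrix (Fin.castLE hs) (Fin.castLE hs) = M :=
  Matrix.ext fun i j => ext_apply_castLE hs i j

theorem eq_of_ext_eq_ext (hs : s ≤ n) (h : ext n M c = ext n N d) : M = N := by
  rw [← ext_submatrix_castLE (M := M) (d := c) hs, h, ext_submatrix_castLE]

theorem exists_eq_ext (hs : s ≤ n) {B : Matrix (Fin n) (Fin n) F}
    (hB : ∀ i j : Fin n, s ≤ i ∨ s ≤ j → B i j = (d • (1 : Matrix (Fin n) (Fin n) F)) i j) :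
    ∃ M : Matrix (Fin s) (Fin s) F, B = ext n M d := by
  refine ⟨B.submatrix (Fin.castLE hs) (Fin.castLE hs), Matrix.ext fun i j => ?_⟩
  by_cases hij : s ≤ i ∨ s ≤ j
  · rw [hB i j hij, ext_apply_of_le hij]
  · push Not at hij
    obtain ⟨i, rfl⟩ : ∃ i' : Fin s, i'.castLE hs = i := ⟨⟨i, hij.1⟩, rfl⟩
    obtain ⟨j, rfl⟩ : ∃ j' : Fin s, j'.castLE hs = j := ⟨⟨j, hij.2⟩, rfl⟩
    rw [ext_apply_castLE, submatrix_apply]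

theorem exists_eq_ext_zero (hs : s ≤ n) {B : Matrix (Fin n) (Fin n) F}
    (hrow : ∀ i : Fin n, s ≤ i → B i = 0) (hcol : ∀ j : Fin n, s ≤ j → Bᵀ j = 0) :
    ∃ M : Matrix (Fin s) (Fin s) F, B = ext n M 0 := by
  refine exists_eq_ext hs fun i j hij => ?_
  rw [zero_smul, Matrix.zero_apply]
  exact hij.elim (fun hi => congrFun (hrow i hi) j) fun hj => congrFun (hcol j hj) i

theorem ext_add_eq_reindex_fromBlocks (t : ℕ) (M : Matrix (Fin s) (Fin s) F) (d : F) :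
    ext (s + t) M d = reindex finSumFinEquiv finSumFinEquiv (fromBlocks M 0 0 (d • 1)) := by
  have hne : ∀ (i : Fin t) (j : Fin s), s + (i : ℕ) ≠ j := fun i j => by omega
  ext i j
  cases i using Fin.addCases <;> cases j using Fin.addCases <;>
    simp [_root_.ext, one_apply, Fin.ext_iff, hne]

theorem ext_mul_ext (hs : s ≤ n) : ext n M c * ext n N d = ext n (M * N) (c * d) := by
  obtain ⟨t, rfl⟩ := Nat.exists_eq_add_of_le hs
  simp [ext_add_eq_reindex_fromBlocks, fromBlocks_multiply, smul_smul, mul_comm]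

theorem det_ext (hs : s ≤ n) : (ext n M d).det = M.det * d ^ (n - s) := by
  obtain ⟨t, rfl⟩ := Nat.exists_eq_add_of_le hs
  rw [ext_add_eq_reindex_fromBlocks, det_reindex_self, det_fromBlocks_zero₂₁, det_smul, det_one,
    mul_one, Fintype.card_fin, Nat.add_sub_cancel_left]

theorem ext_sub_ext : ext n M c - ext n N d = ext n (M - N) (c - d) := by
  ext i j
  simp only [_root_.ext, Matrix.sub_apply, of_apply]
  split_ifs <;> simp only [sub_self]

theorem ext_transpose : (ext n M d)ᵀ = ext n Mᵀ d := by
  ext i j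
  simp only [_root_.ext, of_apply, transpose_apply, Fin.ext_iff]
  split_ifs <;> first | rfl | omega

theorem ext_one_eq_diagonal : ext n (1 : Matrix (Fin s) (Fin s) F) d =
    diagonal fun i : Fin n => if (i : ℕ) < s then 1 else d := by
  ext i j
  simp only [_root_.ext, of_apply, one_apply, diagonal_apply, Fin.ext_iff]
  split_ifs <;> first | rfl | omega

theorem ext_one_one : ext n (1 : Matrix (Fin s) (Fin s) F) 1 = 1 := by
  simp only [ext_one_eq_diagonal, ite_self, diagonal_one]

theorem inv_ext (hs : s ≤ n) (hM : IsUnit M) (hd : d ≠ 0) :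
    (ext n M d)⁻¹ = ext n M⁻¹ d⁻¹ := by
  apply inv_eq_right_inv
  rw [ext_mul_ext hs, mul_nonsing_inv _ ((isUnit_iff_isUnit_det M).mp hM), mul_inv_cancel₀ hd,
    ext_one_one]

end Ext

section Reduction

variable {F : Type*} [Field F] {s n : ℕ}

theorem InFIJ.of_ext (hs : s ≤ n) {I J B : Matrix (Fin s) (Fin s) F} {a b c : F}
    (h : InFIJ (ext n I a) (ext n J b) (ext n B c)) : InFIJ I J B := by
  rw [InFIJ, ext_mul_ext hs, ext_mul_ext hs] at h
  exact eq_of_ext_eq_ext hs h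

theorem IsLEU.of_ext (hs : s ≤ n) {I J A L E U : Matrix (Fin s) (Fin s) F}
    (h : IsLEU (ext n I 0) (ext n J 0) (ext n A 0) (ext n L 1) (ext n E 0) (ext n U 1)) :
    IsLEU I J A L E U := by
  obtain ⟨hA, hE, hLunit, hLlower, hUupper, hUdiag, hLI, hUJ⟩ := h
  have hL : IsUnit L := by
    rwa [isUnit_iff_isUnit_det, det_ext hs, one_pow, mul_one, ← isUnit_iff_isUnit_det] at hLunit
  have hupper : U.IsUpperTriangular := fun i j hij => by
    simpa only [ext_apply_castLE] using hUupper (i.castLE hs) (j.castLE hs) hij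
  have hdiag : ∀ i, U i i = 1 := fun i => by
    simpa only [ext_apply_castLE] using hUdiag (i.castLE hs)
  have hU : IsUnit U :=
    (isUnit_iff_isUnit_diag_of_isUpperTriangular hupper).mpr fun i => hdiag i ▸ isUnit_one
  refine ⟨?_, ?_, hL, fun i j hij => ?_, fun _ _ hij => hupper hij, hdiag, ?_, ?_⟩
  · rw [inv_ext hs hL one_ne_zero, inv_ext hs hU one_ne_zero, ext_mul_ext hs, ext_mul_ext hs] at hA
    exact eq_of_ext_eq_ext hs hA
  · simpa only [ext_submatrix_castLE] using
      hE.submatrix (Fin.castLE_injective hs) (Fin.castLE_injective hs)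
  · simpa only [ext_apply_castLE] using hLlower (i.castLE hs) (j.castLE hs) hij
  · rw [ext_transpose, ← ext_one_one (s := s), ext_mul_ext hs, ext_sub_ext, ext_sub_ext] at hLI
    exact hLI.of_ext hs
  · rw [ext_transpose, ← ext_one_one (s := s), ext_mul_ext hs, ext_sub_ext, ext_sub_ext] at hUJ
    exact hUJ.of_ext hs

theorem exists_eq_ext_of_isLowerTriangular (hs : s ≤ n) {I E L : Matrix (Fin n) (Fin n) F}
    (hI : ∀ i : Fin n, s ≤ i → I i = 0) (hE : InP E) (hlower : L.IsLowerTriangular)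
    (hdiag : ∀ i, L i i ≠ 0) (h : InFIJ I (E * Eᵀ) (L - (1 - E * Eᵀ))) :
    ∃ M : Matrix (Fin s) (Fin s) F, L = ext n M 1 := by
  refine exists_eq_ext hs fun i j hij => ?_
  rw [one_smul]
  rcases le_or_gt s i with hi | hi
  · rw [row_eq_one_of_inFIJ hE (hdiag i) h (hI i hi)]
  · have hlt : i < j := hi.trans_le (hij.resolve_left hi.not_ge)
    rw [hlower hlt, one_apply_ne hlt.ne]

theorem leu_reduction_general (hs : s ≤ n) (I J A : Matrix (Fin s) (Fin s) F)
    (L' E' U' : Matrix (Fin n) (Fin n) F)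
    (hLEU' : IsLEU (ext n I 0) (ext n J 0) (ext n A 0) L' E' U') :
    ∃ L E U : Matrix (Fin s) (Fin s) F,
      L' = ext n L 1 ∧ E' = ext n E 0 ∧ U' = ext n U 1 ∧ IsLEU I J A L E U := by
  have ⟨_, hE, hLunit, hLlower, hUupper, hUdiag, hLI, hUJ⟩ := hLEU'
  have hLdiag : ∀ i, L' i i ≠ 0 := fun i =>
    ((isUnit_iff_isUnit_diag_of_isUpperTriangular (M := L'ᵀ) fun i j => hLlower j i).mp
      ((isUnit_transpose L').mpr hLunit) i).ne_zero
  have hUTdiag : ∀ i, U'ᵀ i i ≠ 0 := fun i => (hUdiag i).trans_ne one_ne_zero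
  have hUTJ : InFIJ (ext n Jᵀ 0) (E'ᵀ * E'ᵀᵀ) (U'ᵀ - (1 - E'ᵀ * E'ᵀᵀ)) := by
    simpa only [ext_transpose, transpose_sub, transpose_mul, transpose_one, transpose_transpose]
      using hUJ.transpose
  obtain ⟨L, rfl⟩ := exists_eq_ext_of_isLowerTriangular hs (fun _ => ext_zero_row_eq_zero) hE
    (fun i j => hLlower i j) hLdiag hLI
  obtain ⟨V, hV⟩ : ∃ V : Matrix (Fin s) (Fin s) F, U'ᵀ = ext n V 1 :=
    exists_eq_ext_of_isLowerTriangular hs (fun _ => ext_zero_row_eq_zero) hE.transpose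
      (fun i j => hUupper j i) hUTdiag hUTJ
  obtain ⟨E, rfl⟩ : ∃ E : Matrix (Fin s) (Fin s) F, E' = ext n E 0 := exists_eq_ext_zero hs
    (fun i hi => row_eq_zero_of_inFIJ hE (hLdiag i) hLI (ext_zero_row_eq_zero hi))
    (fun j hj => row_eq_zero_of_inFIJ hE.transpose (hUTdiag j) hUTJ (ext_zero_row_eq_zero hj))
  obtain rfl : U' = ext n Vᵀ 1 := by rw [← ext_transpose, ← hV, transpose_transpose]
  exact ⟨L, E, Vᵀ, rfl, rfl, rfl, hLEU'.of_ext hs⟩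

end Reduction

/-- Theorem 2 (reduction step): let `2^(k-1) < s < 2^k`, `n = 2^k`, and let `A'`
be the `n×n` matrix with top-left `s×s` block `A` and zeros elsewhere, so that
`A' ∈ F_{I,I}` with `I = diag(𝟙_s, 0)`. If `(L', E', U')` is an
LEU-decomposition of `A'`, then `L' = diag(L, 𝟙)`, `U' = diag(U, 𝟙)`,
`E' = diag(E, 0)` for some `s×s` matrices `L, E, U`, and `(L, E, U)` is an
LEU-decomposition of `A`. -/
theorem leu_reduction {F : Type*} [Field F] {s k : ℕ}
    (hk1 : 2 ^ (k - 1) < s) (hk2 : s < 2 ^ k)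
    (A : Matrix (Fin s) (Fin s) F)
    (L' E' U' : Matrix (Fin (2 ^ k)) (Fin (2 ^ k)) F)
    (hLEU' : IsLEU
      (Matrix.diagonal fun i : Fin (2 ^ k) => if (i : ℕ) < s then (1 : F) else 0)
      (Matrix.diagonal fun i : Fin (2 ^ k) => if (i : ℕ) < s then (1 : F) else 0)
      (ext (2 ^ k) A 0) L' E' U') :
    ∃ L E U : Matrix (Fin s) (Fin s) F,
      L' = ext (2 ^ k) L 1 ∧ E' = ext (2 ^ k) E 0 ∧ U' = ext (2 ^ k) U 1 ∧
      IsLEU 1 1 A L E U := by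
  rw [← ext_one_eq_diagonal] at hLEU'
  exact leu_reduction_general hk2.le 1 1 A L' E' U' hLEU'
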